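/- Let g ≥ 4 and let c ∈ ℤ^{2g} be a vector whose g-th coordinate is odd (equivalently, the symplectic pairing of c with B_g = e_{2g} is odd). Then the square T_c² of the symplectic transvection along c lies in Γ_g(p₂), and its image in the abelianization of Γ_g(p₂) is a generator of that group (which is cyclic of order 2); in particular T_c² does not lie in the commutator subgroup of Γ_g(p₂). -/

import Mathlib

open Matrix

theorem zmodcast {a b : ℤ} (h : ((a : ZMod 2)) = (b : ZMod 2)) : a ≡ b [ZMOD 2] :=
  (ZMod.intCast_eq_intCast_iff a b 2).mp h

theorem zmodcast' {a b : ℤ} (h : a ≡ b [ZMOD 2]) : ((a : ZMod 2)) = (b : ZMod 2) :=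
  (ZMod.intCast_eq_intCast_iff a b 2).mpr h

def GammaP2 (g : ℕ) (hg : 1 ≤ g) : Subgroup (Matrix.symplecticGroup (Fin g) ℤ) where
  carrier := {σ | ∀ i : Fin g ⊕ Fin g,
    (σ : Matrix (Fin g ⊕ Fin g) (Fin g ⊕ Fin g) ℤ) i (Sum.inr ⟨g - 1, by omega⟩) ≡
      (1 : Matrix (Fin g ⊕ Fin g) (Fin g ⊕ Fin g) ℤ) i (Sum.inr ⟨g - 1, by omega⟩) [ZMOD 2]}
  one_mem' := fun _ => Int.ModEq.refl _
  mul_mem' := by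
    intro a b ha hb i
    set bg : Fin g ⊕ Fin g := Sum.inr ⟨g - 1, by omega⟩ with hbg
    apply zmodcast
    have hab : ((a * b : Matrix.symplecticGroup (Fin g) ℤ) : Matrix (Fin g ⊕ Fin g) (Fin g ⊕ Fin g) ℤ) i bg =
        ∑ k, (a : Matrix (Fin g ⊕ Fin g) (Fin g ⊕ Fin g) ℤ) i k *
          (b : Matrix (Fin g ⊕ Fin g) (Fin g ⊕ Fin g) ℤ) k bg := Matrix.mul_apply
    rw [hab]
    push_cast
    calc (∑ k, ((a : Matrix (Fin g ⊕ Fin g) (Fin g ⊕ Fin g) ℤ) i k : ZMod 2) *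
            ((b : Matrix (Fin g ⊕ Fin g) (Fin g ⊕ Fin g) ℤ) k bg : ZMod 2))
        = ∑ k, ((a : Matrix (Fin g ⊕ Fin g) (Fin g ⊕ Fin g) ℤ) i k : ZMod 2) *
            ((1 : Matrix (Fin g ⊕ Fin g) (Fin g ⊕ Fin g) ℤ) k bg : ZMod 2) :=
          Finset.sum_congr rfl fun k _ => by rw [zmodcast' (hb k)]
      _ = ((a : Matrix (Fin g ⊕ Fin g) (Fin g ⊕ Fin g) ℤ) i bg : ZMod 2) := by
          simp [Matrix.one_apply, apply_ite]
      _ = ((1 : Matrix (Fin g ⊕ Fin g) (Fin g ⊕ Fin g) ℤ) i bg : ZMod 2) := zmodcast' (ha i)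
  inv_mem' := by
    intro a ha i
    set bg : Fin g ⊕ Fin g := Sum.inr ⟨g - 1, by omega⟩ with hbg
    have hmul : ((a⁻¹ : Matrix.symplecticGroup (Fin g) ℤ) : Matrix (Fin g ⊕ Fin g) (Fin g ⊕ Fin g) ℤ) *
        ((a : Matrix.symplecticGroup (Fin g) ℤ) : Matrix (Fin g ⊕ Fin g) (Fin g ⊕ Fin g) ℤ) =
        (1 : Matrix (Fin g ⊕ Fin g) (Fin g ⊕ Fin g) ℤ) :=
      congrArg Subtype.val (inv_mul_cancel a)
    apply zmodcast
    calc (((a⁻¹ : Matrix.symplecticGroup (Fin g) ℤ) : Matrix (Fin g ⊕ Fin g) (Fin g ⊕ Fin g) ℤ) i bg : ZMod 2)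
        = ∑ k, (((a⁻¹ : Matrix.symplecticGroup (Fin g) ℤ) : Matrix (Fin g ⊕ Fin g) (Fin g ⊕ Fin g) ℤ) i k : ZMod 2) *
            ((1 : Matrix (Fin g ⊕ Fin g) (Fin g ⊕ Fin g) ℤ) k bg : ZMod 2) := by
          simp [Matrix.one_apply, apply_ite]
      _ = ∑ k, (((a⁻¹ : Matrix.symplecticGroup (Fin g) ℤ) : Matrix (Fin g ⊕ Fin g) (Fin g ⊕ Fin g) ℤ) i k : ZMod 2) *
            ((a : Matrix (Fin g ⊕ Fin g) (Fin g ⊕ Fin g) ℤ) k bg : ZMod 2) :=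
          Finset.sum_congr rfl fun k _ => by rw [zmodcast' (ha k)]
      _ = ((((a⁻¹ : Matrix.symplecticGroup (Fin g) ℤ) : Matrix (Fin g ⊕ Fin g) (Fin g ⊕ Fin g) ℤ) *
            ((a : Matrix.symplecticGroup (Fin g) ℤ) : Matrix (Fin g ⊕ Fin g) (Fin g ⊕ Fin g) ℤ)) i bg : ZMod 2) := by
          rw [Matrix.mul_apply]; push_cast; rfl
      _ = ((1 : Matrix (Fin g ⊕ Fin g) (Fin g ⊕ Fin g) ℤ) i bg : ZMod 2) := by rw [hmul]

/-- The standard symplectic form on `ℤ^{2g}`, determined by `⟨e_i, e_{g+i}⟩ = 1`. -/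
def symFormZ {g : ℕ} (x y : Fin g ⊕ Fin g → ℤ) : ℤ :=
  ∑ i : Fin g, (x (Sum.inl i) * y (Sum.inr i) - x (Sum.inr i) * y (Sum.inl i))

/-- The symplectic transvection `T_c : x ↦ x + ⟨x,c⟩c` along `c ∈ ℤ^{2g}`, as a matrix. -/
def symTransvection {g : ℕ} (c : Fin g ⊕ Fin g → ℤ) :
    Matrix (Fin g ⊕ Fin g) (Fin g ⊕ Fin g) ℤ :=
  1 + Matrix.of fun i j => symFormZ (Pi.single j 1) c * c i


namespace SpAux

variable {g : ℕ}

/-- Index type of the standard basis. -/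
abbrev Idx (g : ℕ) := Fin g ⊕ Fin g
/-- The lattice. -/
abbrev Vec (g : ℕ) := Idx g → ℤ
/-- The symplectic group. -/
abbrev Sp (g : ℕ) := Matrix.symplecticGroup (Fin g) ℤ

/-- Standard basis vectors. -/
def e (r : Idx g) : Vec g := Pi.single r 1

/-- Action on vectors. -/
def act (s : Sp g) (x : Vec g) : Vec g := s.1 *ᵥ x

theorem form_add_left (x y z : Vec g) : symFormZ (x + y) z = symFormZ x z + symFormZ y z := by
  simp only [symFormZ, ← Finset.sum_add_distrib, Pi.add_apply]
  exact Finset.sum_congr rfl fun i _ => by ring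

theorem form_smul_left (a : ℤ) (x z : Vec g) : symFormZ (a • x) z = a * symFormZ x z := by
  simp only [symFormZ, Finset.mul_sum, Pi.smul_apply, smul_eq_mul]
  exact Finset.sum_congr rfl fun i _ => by ring

theorem form_neg (x y : Vec g) : symFormZ x y = - symFormZ y x := by
  simp only [symFormZ, ← Finset.sum_neg_distrib]
  exact Finset.sum_congr rfl fun i _ => by ring

theorem form_self (x : Vec g) : symFormZ x x = 0 := by
  have := form_neg x x
  omega

theorem form_add_right (x y z : Vec g) : symFormZ x (y + z) = symFormZ x y + symFormZ x z := by
  rw [form_neg, form_add_left, form_neg y, form_neg z]; ring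

theorem form_smul_right (a : ℤ) (x z : Vec g) : symFormZ x (a • z) = a * symFormZ x z := by
  rw [form_neg, form_smul_left, form_neg z]; ring

theorem form_J (x y : Vec g) : x ⬝ᵥ (Matrix.J (Fin g) ℤ *ᵥ y) = - symFormZ x y := by
  simp [Matrix.J, dotProduct, Matrix.mulVec, Fintype.sum_sum_type, symFormZ, Matrix.one_apply,
    Finset.sum_sub_distrib]
  try ring

theorem mem_iff_form (A : Matrix (Idx g) (Idx g) ℤ) :
    A ∈ Matrix.symplecticGroup (Fin g) ℤ ↔
      ∀ x y, symFormZ (A *ᵥ x) (A *ᵥ y) = symFormZ x y := by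
  rw [SymplecticGroup.mem_iff']
  have key : ∀ x y : Vec g, x ⬝ᵥ ((Aᵀ * Matrix.J (Fin g) ℤ * A) *ᵥ y)
      = - symFormZ (A *ᵥ x) (A *ᵥ y) := by
    intro x y
    rw [← form_J, ← Matrix.mulVec_mulVec, ← Matrix.mulVec_mulVec, Matrix.dotProduct_mulVec,
      Matrix.vecMul_transpose]
  constructor
  · intro h x y
    have := key x y
    rw [h, form_J] at this
    omega
  · intro h
    ext r s
    have := key (Pi.single r 1) (Pi.single s 1)
    rw [h, ← form_J] at this
    simpa using this

theorem form_act (s : Sp g) (x y : Vec g) : symFormZ (act s x) (act s y) = symFormZ x y :=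
  (mem_iff_form s.1).1 s.2 x y

theorem act_mul (s t : Sp g) (x : Vec g) : act (s * t) x = act s (act t x) := by
  simp [act, Matrix.mulVec_mulVec]

theorem act_one (x : Vec g) : act (1 : Sp g) x = x := by
  simp [act]

theorem act_add (s : Sp g) (x y : Vec g) : act s (x + y) = act s x + act s y := by
  simp [act, Matrix.mulVec_add]

theorem act_smul (s : Sp g) (a : ℤ) (x : Vec g) : act s (a • x) = a • act s x := by
  exact Matrix.mulVec_smul _ _ _

theorem act_inv_act (s : Sp g) (x : Vec g) : act s (act s⁻¹ x) = x := by
  rw [← act_mul, mul_inv_cancel, act_one]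

theorem act_act_inv (s : Sp g) (x : Vec g) : act s⁻¹ (act s x) = x := by
  rw [← act_mul, inv_mul_cancel, act_one]

theorem act_e (s : Sp g) (r q : Idx g) : act s (e r) q = s.1 q r := by
  simp [act, e]

theorem sp_ext' {s t : Sp g} (h : ∀ r, act s (e r) = act t (e r)) : s = t := by
  apply Subtype.ext
  ext q r
  rw [← act_e, ← act_e, h]

theorem sp_ext {s t : Sp g} (h : ∀ x, act s x = act t x) : s = t := sp_ext' fun _ => h _

/-- Powers of transvections, as matrices. -/
def Tmat (k : ℤ) (c : Vec g) : Matrix (Idx g) (Idx g) ℤ :=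
  1 + Matrix.of fun i j => k * symFormZ (Pi.single j 1) c * c i

theorem form_single (x c : Vec g) : ∑ j, symFormZ (Pi.single j 1) c * x j = symFormZ x c := by
  simp [Fintype.sum_sum_type, symFormZ, Pi.single_apply, Finset.sum_sub_distrib, mul_comm]
  try ring

theorem Tmat_mulVec (k : ℤ) (c x : Vec g) : Tmat k c *ᵥ x = x + (k * symFormZ x c) • c := by
  ext i
  simp only [Tmat, Matrix.add_mulVec, Matrix.one_mulVec, Pi.add_apply, Pi.smul_apply, smul_eq_mul]
  congr 1
  simp only [Matrix.mulVec, dotProduct, Matrix.of_apply]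
  rw [← form_single x c, Finset.mul_sum, Finset.sum_mul]
  exact Finset.sum_congr rfl fun j _ => by ring

/-- Powers of transvections. -/
def T (k : ℤ) (c : Vec g) : Sp g := ⟨Tmat k c, by
  rw [mem_iff_form]
  intro x y
  simp only [Tmat_mulVec, form_add_left, form_add_right, form_smul_left, form_smul_right, form_self]
  rw [form_neg c y]; ring⟩

theorem act_T (k : ℤ) (c x : Vec g) : act (T k c) x = x + (k * symFormZ x c) • c :=
  Tmat_mulVec k c x

theorem T_add (j k : ℤ) (c : Vec g) : T j c * T k c = T (j + k) c := by
  apply sp_ext; intro x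
  simp only [act_mul, act_T, form_add_left, form_smul_left, form_self]
  module

theorem T_zero (c : Vec g) : T 0 c = 1 := by
  apply sp_ext; intro x
  simp [act_T, act_one]

theorem T_neg (k : ℤ) (c : Vec g) : T (-k) c = (T k c)⁻¹ := by
  apply eq_inv_of_mul_eq_one_left
  rw [T_add, neg_add_cancel, T_zero]

theorem T_zpow (k n : ℤ) (c : Vec g) : T k c ^ n = T (n * k) c := by
  induction n using Int.induction_on with
  | zero => simp [T_zero]
  | succ n ih => rw [_root_.zpow_add_one, ih, T_add]; congr 1; ring
  | pred n ih => rw [_root_.zpow_sub_one, ih, ← T_neg, T_add]; congr 1; ring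

theorem T_conj (s : Sp g) (k : ℤ) (c : Vec g) : s * T k c * s⁻¹ = T k (act s c) := by
  apply sp_ext; intro x
  simp only [act_mul, act_T, act_add, act_smul, act_inv_act]
  rw [← form_act s (act s⁻¹ x) c, act_inv_act]

/-- Elementary maps of two vectors. -/
def E (k : ℤ) (u v : Vec g) : Sp g := T k (u + v) * T (-k) u * T (-k) v

theorem act_E (k : ℤ) (u v x : Vec g) (h : symFormZ u v = 0) :
    act (E k u v) x = x + (k * symFormZ x u) • v + (k * symFormZ x v) • u := by
  have h' : symFormZ v u = 0 := by rw [form_neg, h, neg_zero]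
  simp only [E, act_mul, act_T, form_add_left, form_add_right, form_smul_left, form_self, h, h']
  module

theorem E_conj (s : Sp g) (k : ℤ) (u v : Vec g) : s * E k u v * s⁻¹ = E k (act s u) (act s v) := by
  simp only [E, ← T_conj, ← act_add]
  group

theorem E_neg (k : ℤ) (u v : Vec g) (h : symFormZ u v = 0) : E (-k) u v = (E k u v)⁻¹ := by
  have h' : symFormZ v u = 0 := by rw [form_neg, h, neg_zero]
  apply eq_inv_of_mul_eq_one_left
  apply sp_ext; intro x
  simp only [act_mul, act_E _ _ _ _ h, form_add_left, form_smul_left, form_self, h, h', act_one]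
  module

theorem E_comm (k : ℤ) (u v : Vec g) (h : symFormZ u v = 0) : E k u v = E k v u := by
  have h' : symFormZ v u = 0 := by rw [form_neg, h, neg_zero]
  apply sp_ext; intro x
  rw [act_E _ _ _ _ h, act_E _ _ _ _ h']
  module

theorem E_mul (k : ℤ) (u v w : Vec g) (hv : symFormZ u v = 0) (hw : symFormZ u w = 0) :
    E k u v * E k u w = E k u (v + w) * T (k ^ 2 * symFormZ w v) u := by
  have hw' : symFormZ w u = 0 := by rw [form_neg, hw, neg_zero]
  have hvw : symFormZ u (v + w) = 0 := by rw [form_add_right, hv, hw, add_zero]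
  apply sp_ext; intro x
  simp only [act_mul, act_E _ _ _ _ hv, act_E _ _ _ _ hw, act_E _ _ _ _ hvw, act_T,
    form_add_left, form_add_right, form_smul_left, form_self, hv, hw, hw']
  module

/-- Sign of a basis index. -/
def sg : Idx g → ℤ
  | Sum.inl _ => 1
  | Sum.inr _ => -1

/-- The index of the hyperbolic pair. -/
def pr : Idx g → Fin g
  | Sum.inl i => i
  | Sum.inr i => i

theorem form_e_right (x : Vec g) (r : Idx g) : symFormZ x (e r) = - sg r * x r.swap := by
  rcases r with i | i <;> simp [symFormZ, e, sg, Pi.single_apply]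

theorem form_e_left (x : Vec g) (r : Idx g) : symFormZ (e r) x = sg r * x r.swap := by
  rw [form_neg, form_e_right]; ring

theorem e_apply (r s : Idx g) : e r s = if s = r then 1 else 0 := by
  simp [e, Pi.single_apply]

theorem pr_swap (r : Idx g) : pr r.swap = pr r := by rcases r with i | i <;> rfl

theorem swap_ne (r : Idx g) : r.swap ≠ r := by rcases r with i | i <;> simp

theorem sg_swap (r : Idx g) : sg r.swap = - sg r := by rcases r with i | i <;> simp [sg]

theorem sg_abs (r : Idx g) : sg r = 1 ∨ sg r = -1 := by rcases r with i | i <;> simp [sg]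

theorem pr_eq {r s : Idx g} (h : pr r = pr s) : r = s ∨ r = s.swap := by
  rcases r with i | i <;> rcases s with j | j <;> simp_all [pr]

theorem form_e_e {r s : Idx g} (h : pr r ≠ pr s) : symFormZ (e r) (e s) = 0 := by
  rw [form_e_left, e_apply, if_neg, mul_zero]
  rintro rfl
  exact h (pr_swap r).symm

end SpAux

namespace SpAux

variable {g : ℕ}

/-- The index of the class `A_g`. -/
def aI (hg : 1 ≤ g) : Idx g := Sum.inl ⟨g - 1, by omega⟩

/-- The index of the class `B_g`. -/
def bI (hg : 1 ≤ g) : Idx g := Sum.inr ⟨g - 1, by omega⟩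

/-- The last index. -/
def la (hg : 1 ≤ g) : Fin g := ⟨g - 1, by omega⟩

theorem mem_Gamma (hg : 1 ≤ g) (s : Sp g) :
    s ∈ GammaP2 g hg ↔ ∀ i, act s (e (bI hg)) i ≡ e (bI hg) i [ZMOD 2] := by
  constructor
  · intro h i
    have := h i
    rw [act_e, e_apply]
    rwa [Matrix.one_apply] at this
  · intro h i
    have := h i
    rw [act_e, e_apply] at this
    rwa [Matrix.one_apply]

theorem T_mem (hg : 1 ≤ g) (k : ℤ) (c : Vec g) (h : Even (k * c (aI hg))) :
    T k c ∈ GammaP2 g hg := by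
  rw [mem_Gamma]
  intro i
  rw [act_T, form_e_left]
  obtain ⟨d, hd⟩ := h
  have h2 : (bI hg).swap = aI hg := rfl
  have h3 : sg (bI hg) = -1 := rfl
  rw [h2, h3, Pi.add_apply, Pi.smul_apply, smul_eq_mul]
  have : k * (-1 * c (aI hg)) * c i = 2 * (- d * c i) := by
    linear_combination (- c i) * hd
  rw [this]
  simp [Int.ModEq]

theorem E_mem (hg : 1 ≤ g) (k : ℤ) (u v : Vec g) (hu : Even (k * u (aI hg)))
    (hv : Even (k * v (aI hg))) : E k u v ∈ GammaP2 g hg := by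
  refine mul_mem (mul_mem (T_mem hg _ _ ?_) (T_mem hg _ _ ?_)) (T_mem hg _ _ ?_)
  · rw [Pi.add_apply, mul_add]; exact hu.add hv
  · rw [neg_mul]; exact hu.neg
  · rw [neg_mul]; exact hv.neg

/-- Elements of Γ with the same class in the abelianization. -/
def AbEq (hg : 1 ≤ g) (x y : Sp g) : Prop :=
  ∃ (hx : x ∈ GammaP2 g hg) (hy : y ∈ GammaP2 g hg),
    Abelianization.of (⟨x, hx⟩ : GammaP2 g hg) = Abelianization.of (⟨y, hy⟩ : GammaP2 g hg)

theorem AbEq.symm {hg : 1 ≤ g} {x y : Sp g} (h : AbEq hg x y) : AbEq hg y x := by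
  obtain ⟨a, b, h⟩ := h
  exact ⟨b, a, h.symm⟩

theorem AbEq.trans {hg : 1 ≤ g} {x y z : Sp g} (h : AbEq hg x y) (h' : AbEq hg y z) :
    AbEq hg x z := by
  obtain ⟨a, b, h⟩ := h
  obtain ⟨a', b', h'⟩ := h'
  exact ⟨a, b', h.trans h'⟩

theorem AbEq.refl {hg : 1 ≤ g} {x : Sp g} (h : x ∈ GammaP2 g hg) : AbEq hg x x := ⟨h, h, rfl⟩

theorem AbEq.mul {hg : 1 ≤ g} {x y z w : Sp g} (h : AbEq hg x y) (h' : AbEq hg z w) :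
    AbEq hg (x * z) (y * w) := by
  obtain ⟨a, b, h⟩ := h
  obtain ⟨a', b', h'⟩ := h'
  refine ⟨mul_mem a a', mul_mem b b', ?_⟩
  have := congrArg₂ (· * ·) h h'
  simp only [← map_mul] at this
  exact this

theorem AbEq.cancel {hg : 1 ≤ g} {x y : Sp g} (h : AbEq hg (x * y) x) (hx : x ∈ GammaP2 g hg)
    (hy : y ∈ GammaP2 g hg) : AbEq hg y 1 := by
  obtain ⟨a, b, h⟩ := h
  refine ⟨hy, one_mem _, ?_⟩
  have h1 : (⟨x * y, a⟩ : GammaP2 g hg) = ⟨x, hx⟩ * ⟨y, hy⟩ := rfl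
  have h2 : (⟨1, one_mem _⟩ : GammaP2 g hg) = 1 := rfl
  rw [h1, map_mul] at h
  rw [h2, map_one]
  exact mul_eq_left.mp h

theorem AbEq.conj {hg : 1 ≤ g} {x s : Sp g} (hx : x ∈ GammaP2 g hg) (hs : s ∈ GammaP2 g hg) :
    AbEq hg (s * x * s⁻¹) x := by
  refine ⟨mul_mem (mul_mem hs hx) (inv_mem hs), hx, ?_⟩
  have h1 : (⟨s * x * s⁻¹, mul_mem (mul_mem hs hx) (inv_mem hs)⟩ : GammaP2 g hg)
    = ⟨s, hs⟩ * ⟨x, hx⟩ * ⟨s, hs⟩⁻¹ := rfl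
  rw [h1, map_mul, map_mul, map_inv, mul_comm, ← mul_assoc, inv_mul_cancel, one_mul]

theorem E_abEq (hg : 1 ≤ g) (k : ℤ) (u p q : Vec g) (hk : Even (k * u (aI hg)))
    (hp : p (aI hg) = 0) (hq : q (aI hg) = 0) (hup : symFormZ u p = 0) (huq : symFormZ u q = 0)
    (hpq : symFormZ p q = 1) : AbEq hg (E k u q) (E k u p) := by
  have hs : T 1 (q + (-1 : ℤ) • p) ∈ GammaP2 g hg := T_mem hg _ _ (by simp [hp, hq])
  have hE : E k u p ∈ GammaP2 g hg := E_mem hg _ _ _ hk (by simp [hp])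
  have := AbEq.conj hE hs
  rw [E_conj, act_T, act_T] at this
  simp only [form_add_right, form_smul_right, hup, huq, hpq, form_self] at this
  convert this using 2
  · simp
  · module

/-- Multiplicities. -/
def mm (hg : 1 ≤ g) (r : Idx g) : ℤ := if r = aI hg then 2 else 1

theorem mm_even (hg : 1 ≤ g) (r : Idx g) : Even (mm hg r * e r (aI hg)) := by
  unfold mm
  rw [e_apply]
  split_ifs with h h' h'
  · simp
  · simp
  · exact absurd h'.symm h
  · simp

theorem e_aI {hg : 1 ≤ g} {s : Idx g} (h : pr s ≠ la hg) : e s (aI hg) = 0 := by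
  rw [e_apply, if_neg]
  rintro rfl
  exact h rfl

theorem comm_core (hg : 1 ≤ g) (r : Idx g) (i j : Fin g) (hij : i ≠ j) (hir : i ≠ pr r)
    (hjr : j ≠ pr r) (hi : i ≠ la hg) (hj : j ≠ la hg) :
    AbEq hg (E (mm hg r) (e r) (e (Sum.inl i))) 1 ∧
    AbEq hg (E (mm hg r) (e r) (e (Sum.inr i))) 1 ∧
    AbEq hg (T (mm hg r ^ 2) (e r)) 1 := by
  have hk := mm_even hg r
  set k := mm hg r with hkdef
  have a1 : e (Sum.inl i) (aI hg) = 0 := e_aI hi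
  have a2 : e (Sum.inr i) (aI hg) = 0 := e_aI hi
  have a3 : e (Sum.inl j) (aI hg) = 0 := e_aI hj
  have a4 : e (Sum.inr j) (aI hg) = 0 := e_aI hj
  have o1 : symFormZ (e r) (e (Sum.inl i)) = 0 := form_e_e (Ne.symm hir)
  have o2 : symFormZ (e r) (e (Sum.inr i)) = 0 := form_e_e (Ne.symm hir)
  have o3 : symFormZ (e r) (e (Sum.inl j)) = 0 := form_e_e (Ne.symm hjr)
  have o4 : symFormZ (e r) (e (Sum.inr j)) = 0 := form_e_e (Ne.symm hjr)
  have p12 : symFormZ (e (Sum.inl i)) (e (Sum.inr i)) = 1 := by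
    rw [form_e_left, e_apply]; simp [sg]
  have p21 : symFormZ (e (Sum.inr i)) (e (Sum.inl i)) = -1 := by rw [form_neg, p12]
  have p34 : symFormZ (e (Sum.inl j)) (e (Sum.inr j)) = 1 := by
    rw [form_e_left, e_apply]; simp [sg]
  have p13 : symFormZ (e (Sum.inl i)) (e (Sum.inl j)) = 0 := form_e_e hij
  have p23 : symFormZ (e (Sum.inr i)) (e (Sum.inl j)) = 0 := form_e_e hij
  have p32 : symFormZ (e (Sum.inl j)) (e (Sum.inr i)) = 0 := form_e_e hij.symm
  have p24 : symFormZ (e (Sum.inr i)) (e (Sum.inr j)) = 0 := form_e_e hij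
  have c1 := E_abEq hg k (e r) (e (Sum.inl i)) (e (Sum.inr i)) hk a1 a2 o1 o2 p12
  have c2 := E_abEq hg k (e r) (e (Sum.inl i)) (e (Sum.inr i) + e (Sum.inl j)) hk a1
    (by simp [a2, a3]) o1 (by simp [form_add_right, o2, o3]) (by simp [form_add_right, p12, p13])
  have c3 := E_abEq hg k (e r) (e (Sum.inr i) + e (Sum.inl j)) (e (Sum.inr j)) hk
    (by simp [a2, a3]) a4 (by simp [form_add_right, o2, o3]) o4
    (by simp [form_add_left, p24, p34])
  have c4 := E_abEq hg k (e r) (e (Sum.inl j)) (e (Sum.inr j)) hk a3 a4 o3 o4 p34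
  have c5 := E_abEq hg k (e r) (e (Sum.inl i)) (e (Sum.inl i) + e (Sum.inr i)) hk a1
    (by simp [a1, a2]) o1 (by simp [form_add_right, o1, o2])
    (by simp [form_add_right, form_self, p12])
  have m1 := E_mul k (e r) (e (Sum.inr i)) (e (Sum.inl j)) o2 o3
  rw [p32, mul_zero, T_zero, mul_one] at m1
  have m2 := E_mul k (e r) (e (Sum.inr i)) (e (Sum.inl i)) o2 o1
  rw [p12, mul_one, add_comm] at m2
  have i1 : E k (e r) (e (Sum.inl i)) ∈ GammaP2 g hg := E_mem hg _ _ _ hk (by simp [a1])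
  have i2 : E k (e r) (e (Sum.inr i)) ∈ GammaP2 g hg := E_mem hg _ _ _ hk (by simp [a2])
  have i3 : E k (e r) (e (Sum.inl j)) ∈ GammaP2 g hg := E_mem hg _ _ _ hk (by simp [a3])
  have iT : T (k ^ 2) (e r) ∈ GammaP2 g hg := by
    apply T_mem
    rw [pow_two, mul_assoc]
    exact hk.mul_left k
  have d3 : AbEq hg (E k (e r) (e (Sum.inl j))) 1 := by
    apply AbEq.cancel (x := E k (e r) (e (Sum.inr i))) _ i2 i3
    rw [m1]
    exact c2.trans c1.symm
  have d2 : AbEq hg (E k (e r) (e (Sum.inr i))) 1 :=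
    ((c1.trans c2.symm).trans c3.symm).trans (c4.trans d3)
  have d1 : AbEq hg (E k (e r) (e (Sum.inl i))) 1 := c1.symm.trans d2
  refine ⟨d1, d2, ?_⟩
  have d5 := c5.trans d1
  apply AbEq.cancel (x := E k (e r) (e (Sum.inl i) + e (Sum.inr i))) _ d5.1 iT
  rw [← m2]
  have := d2.mul d1
  rw [mul_one] at this
  exact this.trans d5.symm

end SpAux

namespace SpAux

variable {g : ℕ}

theorem exists_min {α : Type} (P : α → Prop) (f : α → ℕ) (h : ∃ x, P x) :
    ∃ x, P x ∧ ∀ y, P y → f x ≤ f y := by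
  obtain ⟨x, hx, hm⟩ := WellFounded.has_min (measure f).wf {x | P x} h
  exact ⟨x, hx, fun y hy => not_lt.mp (hm y hy)⟩

theorem half_le {x z : ℤ} (h1 : |x| ≤ |x + z|) (h2 : |x| ≤ |x - z|) (hz : z ≠ 0) :
    2 * |x| ≤ |z| := by
  rcases abs_cases x with h | h <;> rcases abs_cases z with h' | h' <;>
  rcases abs_cases (x + z) with h'' | h'' <;> rcases abs_cases (x - z) with h3 | h3 <;> omega

theorem arith_core {x y m n : ℤ} (hm : 0 < m) (hn : 0 < n) (hmn : m * n < 4)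
    (h1 : ∀ t : ℤ, t = 1 ∨ t = -1 → |x| ≤ |x + t * m * y|)
    (h2 : ∀ t : ℤ, t = 1 ∨ t = -1 → |y| ≤ |y + t * n * x|) : x = 0 ∨ y = 0 := by
  by_contra hcon
  push Not at hcon
  obtain ⟨hx, hy⟩ := hcon
  have a1 := half_le (x := x) (z := m * y) (by simpa using h1 1 (Or.inl rfl))
    (by simpa [sub_eq_add_neg] using h1 (-1) (Or.inr rfl)) (mul_ne_zero hm.ne' hy)
  have a2 := half_le (x := y) (z := n * x) (by simpa using h2 1 (Or.inl rfl))
    (by simpa [sub_eq_add_neg] using h2 (-1) (Or.inr rfl)) (mul_ne_zero hn.ne' hx)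
  rw [abs_mul, abs_of_pos hm] at a1
  rw [abs_mul, abs_of_pos hn] at a2
  have hx' : 0 < |x| := abs_pos.mpr hx
  have e1 : m * (2 * |y|) ≤ m * (n * |x|) := mul_le_mul_of_nonneg_left a2 hm.le
  nlinarith

/-- The size of a vector. -/
def sz (D : Finset (Idx g)) (w : Vec g) : ℕ := ∑ r ∈ D, (w r).natAbs

theorem sz_coord {D : Finset (Idx g)} {w w' : Vec g} {r : Idx g} (hr : r ∈ D)
    (h : ∀ s ∈ D, s ≠ r → w' s = w s) (hle : sz D w ≤ sz D w') : |w r| ≤ |w' r| := by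
  unfold sz at hle
  rw [← Finset.add_sum_erase D _ hr, ← Finset.add_sum_erase D (fun s => (w' s).natAbs) hr] at hle
  have : ∑ s ∈ D.erase r, (w' s).natAbs = ∑ s ∈ D.erase r, (w s).natAbs :=
    Finset.sum_congr rfl fun s hs => by
      rw [h s (Finset.mem_of_mem_erase hs) (Finset.ne_of_mem_erase hs)]
  rw [this] at hle
  simp only [Int.abs_eq_natAbs]
  omega

/-- Elements fixing the hyperbolic pairs outside `S`. -/
def Fixes (S : Finset (Fin g)) (s : Sp g) : Prop := ∀ r, pr r ∉ S → act s (e r) = e r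

theorem Fixes.mul {S : Finset (Fin g)} {s t : Sp g} (hs : Fixes S s) (ht : Fixes S t) :
    Fixes S (s * t) := fun r hr => by rw [act_mul, ht r hr, hs r hr]

theorem fixes_T {S : Finset (Fin g)} (k : ℤ) {r : Idx g} (hr : pr r ∈ S) : Fixes S (T k (e r)) := by
  intro s hs
  rw [act_T, form_e_e]
  · simp
  · intro h; rw [h] at hs; exact hs hr

theorem fixes_E {S : Finset (Fin g)} (k : ℤ) {r q : Idx g} (hr : pr r ∈ S) (hq : pr q ∈ S)
    (hrq : pr r ≠ pr q) : Fixes S (E k (e r) (e q)) := by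
  intro s hs
  rw [act_E _ _ _ _ (form_e_e hrq), form_e_e, form_e_e]
  · simp
  · intro h; rw [h] at hs; exact hs hq
  · intro h; rw [h] at hs; exact hs hr

/-- Subgroups containing the elementary generators. -/
structure Good (hg : 1 ≤ g) (K : Subgroup (Sp g)) : Prop where
  le : K ≤ GammaP2 g hg
  memT : ∀ r, T (mm hg r) (e r) ∈ K
  memE : ∀ r s, pr r ≠ pr s → E (mm hg r * mm hg s) (e r) (e s) ∈ K

theorem mm_pos (hg : 1 ≤ g) (r : Idx g) : 0 < mm hg r := by
  unfold mm; split_ifs <;> norm_num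

theorem mm_one {hg : 1 ≤ g} {r : Idx g} (h : r ≠ aI hg) : mm hg r = 1 := by
  unfold mm; rw [if_neg h]

theorem mm_swap (hg : 1 ≤ g) (r : Idx g) : mm hg r * mm hg r.swap < 4 := by
  unfold mm
  split_ifs with h1 h2
  · exact absurd (h2.trans h1.symm) (swap_ne r)
  all_goals norm_num

theorem mm_four {hg : 1 ≤ g} {r s : Idx g} (h : pr r ≠ pr s) :
    (mm hg r * mm hg s.swap) * (mm hg s * mm hg r.swap) < 4 := by
  by_cases hr : pr r = la hg
  · have h1 : mm hg s = 1 := mm_one (by rintro rfl; exact h hr)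
    have h2 : mm hg s.swap = 1 := mm_one (by
      intro h2
      have := congrArg pr h2
      rw [pr_swap] at this
      exact h (hr.trans this.symm))
    have := mm_swap hg r
    rw [h1, h2]; simpa using this
  · have h1 : mm hg r = 1 := mm_one (by rintro rfl; exact hr rfl)
    have h2 : mm hg r.swap = 1 := mm_one (by
      intro h2
      have := congrArg pr h2
      rw [pr_swap] at this
      exact hr this)
    have := mm_swap hg s
    rw [h1, h2]; rw [mul_comm] at this; simpa using this

section
variable {hg : 1 ≤ g} {K : Subgroup (Sp g)} (hK : Good hg K) {S : Finset (Fin g)}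

theorem Good.T' (hK : Good hg K) (n : ℤ) (r : Idx g) : T (n * mm hg r) (e r) ∈ K := by
  rw [← T_zpow]; exact zpow_mem (hK.memT r) n

theorem Good.E' (hK : Good hg K) (t : ℤ) (ht : t = 1 ∨ t = -1) (r s : Idx g) (h : pr r ≠ pr s) :
    E (t * (mm hg r * mm hg s)) (e r) (e s) ∈ K := by
  rcases ht with rfl | rfl
  · rw [one_mul]; exact hK.memE r s h
  · rw [neg_one_mul, E_neg _ _ _ (form_e_e h)]; exact inv_mem (hK.memE r s h)

theorem sign_mul (r : Idx g) {t : ℤ} (ht : t = 1 ∨ t = -1) :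
    (-sg r * t = 1 ∨ -sg r * t = -1) := by
  rcases sg_abs r with h | h <;> rcases ht with h' | h' <;> simp [h, h']

theorem sg_sq (r : Idx g) : sg r * sg r = 1 := by
  rcases sg_abs r with h | h <;> simp [h]

theorem min_T (hK : Good hg K) {w : Vec g}
    (hmin : ∀ κ ∈ K, Fixes S κ → sz Finset.univ w ≤ sz Finset.univ (act κ w))
    {r : Idx g} (hr : pr r ∈ S) (t : ℤ) : |w r| ≤ |w r + t * mm hg r * w r.swap| := by
  have h1 := hmin _ (hK.T' (-sg r * t) r) (fixes_T _ hr)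
  have h2 := sz_coord (Finset.mem_univ r) (fun s _ hs => by
    rw [act_T]; simp [e_apply, hs]) h1
  convert h2 using 2
  rw [act_T, form_e_right]
  simp only [Pi.add_apply, Pi.smul_apply, smul_eq_mul, e_apply, if_true]
  linear_combination (-(t * mm hg r * w r.swap)) * sg_sq r

theorem min_E (hK : Good hg K) {w : Vec g}
    (hmin : ∀ κ ∈ K, Fixes S κ → sz Finset.univ w ≤ sz Finset.univ (act κ w))
    {r s : Idx g} (hr : pr r ∈ S) (hs : pr s ∈ S) (hrs : pr r ≠ pr s) (h0 : w r.swap = 0)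
    (t : ℤ) (ht : t = 1 ∨ t = -1) : |w r| ≤ |w r + t * (mm hg r * mm hg s) * w s.swap| := by
  have h1 := hmin _ (hK.E' (-sg s * t) (sign_mul s ht) r s hrs) (fixes_E _ hr hs hrs)
  have h2 := sz_coord (Finset.mem_univ r) (fun q _ hq => by
    rw [act_E _ _ _ _ (form_e_e hrs), form_e_right w r, h0]; simp [e_apply, hq]) h1
  convert h2 using 2
  rw [act_E _ _ _ _ (form_e_e hrs), form_e_right, form_e_right, h0]
  simp only [Pi.add_apply, Pi.smul_apply, smul_eq_mul, e_apply, if_true]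
  linear_combination (-(t * (mm hg r * mm hg s) * w s.swap)) * sg_sq s

theorem min_unique (hK : Good hg K) {w : Vec g}
    (hmin : ∀ κ ∈ K, Fixes S κ → sz Finset.univ w ≤ sz Finset.univ (act κ w))
    {r s : Idx g} (hr : pr r ∈ S) (hs : pr s ∈ S) (hrs : r ≠ s) : w r = 0 ∨ w s = 0 := by
  have swp : ∀ r : Idx g, pr r ∈ S → w r = 0 ∨ w r.swap = 0 := by
    intro r hr
    refine arith_core (mm_pos hg r) (mm_pos hg r.swap) (mm_swap hg r)
      (fun t _ => min_T hK hmin hr t) (fun t _ => ?_)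
    have := min_T hK hmin (r := r.swap) (by rwa [pr_swap]) t
    rwa [Sum.swap_swap] at this
  by_cases hp : pr r = pr s
  · rcases pr_eq hp with h | h
    · exact absurd h hrs
    · have := swp s hs
      rw [← h] at this
      exact this.symm
  · by_contra hcon
    push Not at hcon
    have h1 := (swp r hr).resolve_left hcon.1
    have h2 := (swp s hs).resolve_left hcon.2
    have := arith_core (x := w r) (y := w s) (mul_pos (mm_pos hg r) (mm_pos hg s.swap))
      (mul_pos (mm_pos hg s) (mm_pos hg r.swap)) (mm_four hp)
      (fun t ht => by
        have := min_E hK hmin (r := r) (s := s.swap) hr (by rwa [pr_swap]) (by rwa [pr_swap]) h1 t ht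
        rwa [Sum.swap_swap] at this)
      (fun t ht => by
        have := min_E hK hmin (r := s) (s := r.swap) hs (by rwa [pr_swap])
          (by rw [pr_swap]; exact fun h => hp h.symm) h2 t ht
        rwa [Sum.swap_swap] at this)
    tauto

theorem supp {s : Sp g} (hs : Fixes S s) {b r : Idx g} (hb : pr b ∈ S) (hr : pr r ∉ S) :
    act s (e b) r = 0 := by
  have h1 := form_act s (e b) (e r.swap)
  rw [hs r.swap (by rwa [pr_swap]), form_e_right, form_e_e, Sum.swap_swap] at h1
  · rcases sg_abs r.swap with h | h <;> rw [h] at h1 <;> omega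
  · rw [pr_swap]; intro h; rw [h] at hb; exact hr hb

theorem phaseA (hK : Good hg K) {s : Sp g} (hs : Fixes S s) {b : Idx g} (hb : pr b ∈ S) :
    ∃ κ ∈ K, Fixes S κ ∧ ∃ k : Idx g, pr k ∈ S ∧ ∃ q : ℤ, (q = 1 ∨ q = -1) ∧
      act (κ * s) (e b) = q • e k := by
  obtain ⟨κ, ⟨hκ, hκS⟩, hmin⟩ := exists_min (fun κ : Sp g => κ ∈ K ∧ Fixes S κ)
    (fun κ => sz Finset.univ (act (κ * s) (e b)))
    ⟨1, one_mem _, fun r _ => act_one _⟩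
  refine ⟨κ, hκ, hκS, ?_⟩
  set w := act (κ * s) (e b) with hw
  have hmin' : ∀ κ ∈ K, Fixes S κ → sz Finset.univ w ≤ sz Finset.univ (act κ w) := by
    intro κ' h1 h2
    have := hmin (κ' * κ) ⟨mul_mem h1 hκ, h2.mul hκS⟩
    rwa [mul_assoc, act_mul κ'] at this
  have hsupp : ∀ r, pr r ∉ S → w r = 0 := fun r hr => supp (hκS.mul hs) hb hr
  have hinv : act (κ * s)⁻¹ w = e b := act_act_inv _ _
  have hne : ∃ k, w k ≠ 0 := by
    by_contra hcon
    push Not at hcon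
    have h0 : w = 0 := funext hcon
    rw [h0] at hinv
    have h1 : act (κ * s)⁻¹ 0 = (0 : Vec g) := by
      simp [act]
    rw [h1] at hinv
    have := congrFun hinv b
    simp [e_apply] at this
  obtain ⟨k, hk⟩ := hne
  have hkS : pr k ∈ S := by
    by_contra h; exact hk (hsupp k h)
  have hwk : w = w k • e k := by
    ext r
    by_cases hr : r = k
    · subst hr; simp [e_apply]
    · simp only [Pi.smul_apply, e_apply, hr, if_false, smul_zero]
      by_cases hrS : pr r ∈ S
      · exact (min_unique hK hmin' hrS hkS hr).resolve_right hk
      · exact hsupp r hrS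
  refine ⟨k, hkS, w k, ?_, hwk⟩
  rw [hwk, act_smul] at hinv
  have := congrFun hinv b
  simp only [Pi.smul_apply, smul_eq_mul, e_apply b b, if_true] at this
  exact Int.eq_one_or_neg_one_of_mul_eq_one this

end

end SpAux

namespace SpAux

variable {g : ℕ}

section
variable {hg : 1 ≤ g} {K : Subgroup (Sp g)} {S : Finset (Fin g)}

theorem form_ab (i : Fin g) : symFormZ (e (Sum.inl i)) (e (Sum.inr i)) = 1 := by
  rw [form_e_left, e_apply]; simp [sg]

theorem form_ba (i : Fin g) : symFormZ (e (Sum.inr i)) (e (Sum.inl i)) = -1 := by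
  rw [form_neg, form_ab]

theorem form_e_swap (r : Idx g) : symFormZ (e r) (e r.swap) = sg r := by
  rw [form_e_left, e_apply]; simp

theorem inr_ne_aI (i : Fin g) : (Sum.inr i : Idx g) ≠ aI hg := by
  simp [aI]

theorem memT_inr (hK : Good hg K) (n : ℤ) (i : Fin g) : T n (e (Sum.inr i)) ∈ K := by
  have := hK.T' n (Sum.inr i)
  rwa [mm_one (inr_ne_aI i), mul_one] at this

theorem memT_inl_two (hK : Good hg K) (i : Fin g) : T 2 (e (Sum.inl i)) ∈ K := by
  by_cases h : (Sum.inl i : Idx g) = aI hg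
  · have := hK.memT (Sum.inl i)
    unfold mm at this
    rwa [if_pos h] at this
  · have := hK.T' 2 (Sum.inl i)
    rwa [mm_one h, mul_one] at this

theorem reach_neg (hK : Good hg K) {i : Fin g} (hi : i ∈ S) :
    ∃ κ ∈ K, Fixes S κ ∧ act κ ((-1 : ℤ) • e (Sum.inr i)) = e (Sum.inr i) := by
  refine ⟨T 2 (e (Sum.inl i)) * T 1 (e (Sum.inr i)) * T 2 (e (Sum.inl i)),
    mul_mem (mul_mem (memT_inl_two hK i) (memT_inr hK 1 i)) (memT_inl_two hK i),
    ((fixes_T _ hi).mul (fixes_T _ hi)).mul (fixes_T _ hi), ?_⟩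
  simp only [act_mul, act_T, form_add_left, form_smul_left, form_self, form_ab, form_ba]
  module

theorem reach_pm (hK : Good hg K) {i : Fin g} (hi : i ∈ S) (hS : la hg ∉ S) {k : Idx g}
    (hk : pr k ∈ S) :
    ∃ κ ∈ K, Fixes S κ ∧ ∃ q : ℤ, (q = 1 ∨ q = -1) ∧ act κ (e k) = q • e (Sum.inr i) := by
  have hm : ∀ r : Idx g, pr r ∈ S → mm hg r = 1 := fun r hr =>
    mm_one (by rintro rfl; exact hS hr)
  by_cases hki : pr k = i
  · rcases pr_eq (s := Sum.inr i) hki with h | h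
    · subst h
      exact ⟨1, one_mem _, fun r _ => act_one _, 1, Or.inl rfl, by rw [act_one, one_smul]⟩
    · have h' : k = Sum.inl i := h
      subst h'
      have h1 := hK.memT (Sum.inl i)
      rw [hm _ hk] at h1
      refine ⟨T 1 (e (Sum.inl i)) * T 1 (e (Sum.inr i)), mul_mem h1 (memT_inr hK 1 i),
        (fixes_T _ hi).mul (fixes_T _ hi), 1, Or.inl rfl, ?_⟩
      simp only [act_mul, act_T, form_add_left, form_smul_left, form_self, form_ab, form_ba]
      module
  · have p1 : pr k ≠ pr (Sum.inl i : Idx g) := hki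
    have p2 : pr (Sum.inr i : Idx g) ≠ pr k.swap := by rw [pr_swap]; exact fun h => hki h.symm
    have p3 : pr k ≠ pr (Sum.inr i : Idx g) := hki
    have m1 := hK.E' (sg k) (sg_abs k) k (Sum.inl i) p1
    have m2 := hK.memE (Sum.inr i) k.swap p2
    rw [hm _ hk, hm (Sum.inl i) hi, mul_one, mul_one] at m1
    rw [hm k.swap (by rwa [pr_swap]), hm (Sum.inr i) hi, mul_one] at m2
    refine ⟨_, mul_mem m1 m2, (fixes_E (r := k) (q := Sum.inl i) _ hk hi p1).mul
      (fixes_E (r := Sum.inr i) (q := k.swap) _ hi (by rwa [pr_swap]) p2),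
      sg k, sg_abs k, ?_⟩
    rw [act_mul, act_E _ _ _ _ (form_e_e p2), act_E _ _ _ _ (form_e_e p1)]
    simp only [form_add_left, form_smul_left, form_self, form_ba, form_e_swap, form_e_e p3,
      form_e_e p1, form_e_e p3.symm]
    rcases sg_abs k with h | h <;> rw [h] <;> module

theorem phaseA' (hK : Good hg K) {s : Sp g} (hsG : s ∈ GammaP2 g hg) (hs : Fixes S s) {i : Fin g}
    (hi : i ∈ S) (hiS : i = la hg ∨ la hg ∉ S) :
    ∃ κ ∈ K, Fixes S κ ∧ act (κ * s) (e (Sum.inr i)) = e (Sum.inr i) := by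
  have fin : ∀ (κ : Sp g) (q : ℤ), κ ∈ K → Fixes S κ → (q = 1 ∨ q = -1) →
      act (κ * s) (e (Sum.inr i)) = q • e (Sum.inr i) →
      ∃ κ ∈ K, Fixes S κ ∧ act (κ * s) (e (Sum.inr i)) = e (Sum.inr i) := by
    intro κ q h1 h2 hq h3
    rcases hq with rfl | rfl
    · exact ⟨κ, h1, h2, by rw [h3, one_smul]⟩
    · obtain ⟨κ', h4, h5, h6⟩ := reach_neg hK hi
      exact ⟨κ' * κ, mul_mem h4 h1, h5.mul h2, by rw [mul_assoc, act_mul, h3, h6]⟩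
  obtain ⟨κ, hκ, hκS, k, hk, q, hq, hw⟩ := phaseA hK hs (b := Sum.inr i) hi
  rcases hiS with hil | hlS
  · have hG := (mem_Gamma hg _).1 (mul_mem (hK.le hκ) hsG) (bI hg)
    have hb : bI hg = Sum.inr i := by rw [hil]; rfl
    rw [hb, hw] at hG
    have hki : k = Sum.inr i := by
      by_contra hne
      simp [e_apply, Ne.symm hne, Int.ModEq] at hG
    subst hki
    exact fin κ q hκ hκS hq hw
  · obtain ⟨κ', h1, h2, q', hq', h3⟩ := reach_pm hK hi hlS hk
    refine fin (κ' * κ) (q * q') (mul_mem h1 hκ) (h2.mul hκS) ?_ ?_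
    · rcases hq with rfl | rfl <;> rcases hq' with rfl | rfl <;> simp
    · rw [mul_assoc, act_mul, hw, act_smul, h3, smul_smul]

theorem phaseB (hK : Good hg K) {s : Sp g} (hs : Fixes S s) {i : Fin g}
    (hi : i ∈ S) (hiS : i = la hg ∨ la hg ∉ S)
    (hb : act s (e (Sum.inr i)) = e (Sum.inr i)) :
    ∃ κ ∈ K, Fixes S κ ∧ act (κ * s) (e (Sum.inr i)) = e (Sum.inr i) ∧
      act (κ * s) (e (Sum.inl i)) = e (Sum.inl i) := by
  classical
  let D : Finset (Idx g) := Finset.univ.filter fun r => pr r ≠ i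
  obtain ⟨κ, ⟨hκ, hκS, hκb⟩, hmin⟩ := exists_min
    (fun κ : Sp g => κ ∈ K ∧ Fixes S κ ∧ act κ (e (Sum.inr i)) = e (Sum.inr i))
    (fun κ => sz D (act (κ * s) (e (Sum.inl i))))
    ⟨1, one_mem _, fun r _ => act_one _, act_one _⟩
  set w := act (κ * s) (e (Sum.inl i)) with hw
  have hform : symFormZ w (e (Sum.inr i)) = 1 := by
    have h1 : act (κ * s) (e (Sum.inr i)) = e (Sum.inr i) := by rw [act_mul, hb, hκb]
    rw [hw, ← h1, form_act, form_ab]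
  have hwa : w (Sum.inl i) = 1 := by
    rw [form_e_right] at hform
    simpa [sg] using hform
  have hz : ∀ r, pr r ≠ i → w r = 0 := by
    intro r hr
    by_cases hrS : pr r ∈ S
    · have hr1 : mm hg r = 1 := mm_one (by
        rintro rfl
        rcases hiS with h | h
        · exact hr h.symm
        · exact h hrS)
      have key : ∀ t : ℤ, t = 1 ∨ t = -1 → |w r| ≤ |w r + t| := by
        intro t ht
        have p : pr (Sum.inr i : Idx g) ≠ pr r := fun h => hr h.symm
        have h1 := hK.E' t ht (Sum.inr i) r p
        rw [hr1, mm_one (inr_ne_aI i), mul_one, mul_one] at h1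
        have h2 := hmin (E t (e (Sum.inr i)) (e r) * κ) ⟨mul_mem h1 hκ,
          (fixes_E _ hi hrS p).mul hκS, by
            rw [act_mul, hκb, act_E _ _ _ _ (form_e_e p), form_self, form_e_e p]; simp⟩
        rw [mul_assoc, act_mul (E t _ _), ← hw] at h2
        have h3 := sz_coord (r := r) (by simp [D, hr]) (fun q hq hqr => by
          have hqi : q ≠ Sum.inr i := by
            rintro rfl
            exact (Finset.mem_filter.1 hq).2 rfl
          rw [act_E _ _ _ _ (form_e_e p)]
          simp [e_apply, hqr, hqi]) h2
        rw [act_E _ _ _ _ (form_e_e p), hform] at h3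
        have hri : r ≠ Sum.inr i := by
          rintro rfl
          exact hr rfl
        simpa [e_apply, hri] using h3
      have k1 := key 1 (Or.inl rfl)
      have k2 := key (-1) (Or.inr rfl)
      by_contra h0
      rcases abs_cases (w r) with h | h <;> rcases abs_cases (w r + 1) with h' | h' <;>
        rcases abs_cases (w r + -1) with h'' | h'' <;> omega
    · exact supp (hκS.mul hs) (b := Sum.inl i) hi hrS
  refine ⟨T (- w (Sum.inr i)) (e (Sum.inr i)) * κ, mul_mem (memT_inr hK _ i) hκ,
    (fixes_T _ hi).mul hκS, ?_, ?_⟩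
  · rw [act_mul, hb, act_mul, hκb, act_T, form_self]; simp
  · rw [mul_assoc, act_mul, ← hw, act_T, hform]
    ext r
    by_cases hr : pr r = i
    · rcases pr_eq (s := Sum.inr i) hr with h | h
      · subst h; simp [e_apply]
      · have h' : r = Sum.inl i := h
        subst h'; simp [e_apply, hwa]
    · have h1 : r ≠ Sum.inr i := by rintro rfl; exact hr rfl
      have h2 : r ≠ Sum.inl i := by rintro rfl; exact hr rfl
      simp [e_apply, h1, h2, hz r hr]

theorem step (hK : Good hg K) {i : Fin g} (hi : i ∈ S) (hiS : i = la hg ∨ la hg ∉ S)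
    (ih : ∀ s ∈ GammaP2 g hg, Fixes (S.erase i) s → s ∈ K) :
    ∀ s ∈ GammaP2 g hg, Fixes S s → s ∈ K := by
  intro s hsG hs
  obtain ⟨κ, h1, h2, h3⟩ := phaseA' hK hsG hs hi hiS
  obtain ⟨κ', h4, h5, h6, h7⟩ := phaseB hK (h2.mul hs) hi hiS h3
  have h8 : κ' * (κ * s) ∈ K := by
    apply ih
    · exact mul_mem (hK.le h4) (mul_mem (hK.le h1) hsG)
    · intro r hr
      by_cases hri : pr r = i
      · rcases pr_eq (s := Sum.inr i) hri with h | h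
        · subst h; exact h6
        · have h' : r = Sum.inl i := h
          subst h'; exact h7
      · apply (h5.mul (h2.mul hs)) r
        intro hrS
        exact hr (Finset.mem_erase.mpr ⟨hri, hrS⟩)
  rwa [Subgroup.mul_mem_cancel_left _ h4, Subgroup.mul_mem_cancel_left _ h1] at h8

theorem gen_small (hK : Good hg K) (n : ℕ) : ∀ S : Finset (Fin g), S.card = n → la hg ∉ S →
    ∀ s ∈ GammaP2 g hg, Fixes S s → s ∈ K := by
  induction n with
  | zero =>
    intro S hS _ s _ hs
    rw [Finset.card_eq_zero] at hS
    subst hS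
    have : s = 1 := sp_ext' fun r => by rw [hs r (by simp), act_one]
    rw [this]; exact one_mem _
  | succ n ih =>
    intro S hS hl
    obtain ⟨i, hi⟩ : S.Nonempty := by
      rw [← Finset.card_pos]; omega
    exact step hK hi (Or.inr hl) (ih (S.erase i) (by rw [Finset.card_erase_of_mem hi]; omega)
      (fun h => hl (Finset.mem_of_mem_erase h)))

theorem gen (hK : Good hg K) : GammaP2 g hg ≤ K := by
  intro s hs
  refine step (S := Finset.univ) hK (Finset.mem_univ (la hg)) (Or.inl rfl)
    (gen_small hK _ _ rfl (by simp)) s hs ?_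
  intro r hr
  exact absurd (Finset.mem_univ _) hr

end

/-- The subgroup of elements of Γ whose class is a power of the class of `T_A²`. -/
def Kf (hg : 1 ≤ g) (t : GammaP2 g hg) : Subgroup (Sp g) :=
  ((Subgroup.zpowers (Abelianization.of t)).comap Abelianization.of).map (GammaP2 g hg).subtype

theorem mem_Kf {hg : 1 ≤ g} {t : GammaP2 g hg} {x : Sp g} (hx : x ∈ GammaP2 g hg) :
    x ∈ Kf hg t ↔ Abelianization.of (⟨x, hx⟩ : GammaP2 g hg) ∈
      Subgroup.zpowers (Abelianization.of t) := by
  unfold Kf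
  constructor
  · rintro ⟨y, hy, rfl⟩
    exact hy
  · intro h
    exact ⟨⟨x, hx⟩, h, rfl⟩

theorem mem_Kf_of_abEq {hg : 1 ≤ g} {t : GammaP2 g hg} {x : Sp g} (hx : AbEq hg x 1) :
    x ∈ Kf hg t := by
  obtain ⟨h1, h2, h3⟩ := hx
  rw [mem_Kf h1, h3]
  have : (⟨1, h2⟩ : GammaP2 g hg) = 1 := rfl
  rw [this, map_one]
  exact one_mem _

theorem exists_fin (hg4 : 4 ≤ g) (x y z : Fin g) : ∃ j : Fin g, j ≠ x ∧ j ≠ y ∧ j ≠ z := by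
  classical
  by_contra hcon
  push Not at hcon
  have : (Finset.univ : Finset (Fin g)) ⊆ {x, y, z} := by
    intro j _
    simp only [Finset.mem_insert, Finset.mem_singleton]
    by_contra h
    push Not at h
    exact h.2.2 (hcon j h.1 h.2.1)
  have h1 := Finset.card_le_card this
  have h2 : ({x, y, z} : Finset (Fin g)).card ≤ 3 := Finset.card_le_three
  rw [Finset.card_univ, Fintype.card_fin] at h1
  omega

theorem abE (hg : 1 ≤ g) (hg4 : 4 ≤ g) (r s : Idx g) (h : pr r ≠ pr s) (hs : pr s ≠ la hg) :
    AbEq hg (E (mm hg r) (e r) (e s)) 1 := by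
  obtain ⟨j, h1, h2, h3⟩ := exists_fin hg4 (pr r) (pr s) (la hg)
  obtain ⟨c1, c2, _⟩ := comm_core hg r (pr s) j h2.symm h.symm h1 hs h3
  rcases s with i | i
  · exact c1
  · exact c2

theorem abT (hg : 1 ≤ g) (hg4 : 4 ≤ g) (r : Idx g) : AbEq hg (T (mm hg r ^ 2) (e r)) 1 := by
  obtain ⟨i, h1, _, h3⟩ := exists_fin hg4 (pr r) (la hg) (la hg)
  obtain ⟨j, k1, k2, k3⟩ := exists_fin hg4 (pr r) i (la hg)
  exact (comm_core hg r i j k2.symm h1 k1 h3 k3).2.2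

theorem mm_aI (hg : 1 ≤ g) : mm hg (aI hg) = 2 := by simp [mm]

/-- The square of the transvection along `A_g`. -/
def tau (hg : 1 ≤ g) : GammaP2 g hg := ⟨T 2 (e (aI hg)), T_mem hg _ _ (by simp)⟩

theorem good_Kf (hg : 1 ≤ g) (hg4 : 4 ≤ g) : Good hg (Kf hg (tau hg)) where
  le := by
    rintro x ⟨y, _, rfl⟩
    exact y.2
  memT := by
    intro r
    by_cases hr : r = aI hg
    · subst hr
      rw [mm_aI]
      exact (mem_Kf (tau hg).2).2 (Subgroup.mem_zpowers _)
    · have := abT hg hg4 r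
      rw [mm_one hr, one_pow] at this
      rw [mm_one hr]
      exact mem_Kf_of_abEq this
  memE := by
    intro r s h
    by_cases hs : pr s = la hg
    · have hr : pr r ≠ la hg := fun h' => h (h'.trans hs.symm)
      have hr' : mm hg r = 1 := mm_one (by rintro rfl; exact hr rfl)
      rw [hr', one_mul, E_comm _ _ _ (form_e_e h)]
      exact mem_Kf_of_abEq (abE hg hg4 s r h.symm hr)
    · have hs' : mm hg s = 1 := mm_one (by rintro rfl; exact hs rfl)
      rw [hs', mul_one]
      exact mem_Kf_of_abEq (abE hg hg4 r s h hs)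

theorem tau_sq (hg : 1 ≤ g) (hg4 : 4 ≤ g) : Abelianization.of (tau hg) ^ 2 = 1 := by
  have := abT hg hg4 (aI hg)
  rw [mm_aI] at this
  obtain ⟨h1, h2, h3⟩ := this
  have e1 : (⟨T (2 ^ 2) (e (aI hg)), h1⟩ : GammaP2 g hg) = tau hg ^ 2 := by
    apply Subtype.ext
    change T (2 ^ 2) (e (aI hg)) = T 2 (e (aI hg)) ^ 2
    rw [pow_two (T 2 _), T_add]; norm_num
  have e2 : (⟨1, h2⟩ : GammaP2 g hg) = 1 := rfl
  rw [e1, e2, map_one, map_pow] at h3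
  exact h3

theorem ab_cases (hg : 1 ≤ g) (hg4 : 4 ≤ g) (x : Abelianization (GammaP2 g hg)) :
    x = 1 ∨ x = Abelianization.of (tau hg) := by
  obtain ⟨s, rfl⟩ : ∃ s, Abelianization.of s = x := by
    induction x using QuotientGroup.induction_on with
    | H z => exact ⟨z, rfl⟩
  have h := (mem_Kf s.2).1 (gen (good_Kf hg hg4) s.2)
  obtain ⟨n, hn⟩ := Subgroup.mem_zpowers_iff.1 h
  change _ = Abelianization.of s at hn
  rw [← hn]
  have h2 : Abelianization.of (tau hg) ^ (2 : ℤ) = 1 := by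
    exact_mod_cast tau_sq hg hg4
  rcases Int.even_or_odd' n with ⟨m, rfl | rfl⟩
  · left; rw [_root_.zpow_mul, h2, _root_.one_zpow]
  · right; rw [_root_.zpow_add, _root_.zpow_mul, h2, _root_.one_zpow, one_mul, _root_.zpow_one]

/-- Entry used for the invariant. -/
def ent (hg : 1 ≤ g) (s : GammaP2 g hg) : ℤ := s.1.1 (aI hg) (bI hg)

theorem col_mod (hg : 1 ≤ g) (s : GammaP2 g hg) (i : Idx g) :
    s.1.1 i (bI hg) ≡ (if i = bI hg then 1 else 0) [ZMOD 2] := by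
  have := (mem_Gamma hg s.1).1 s.2 i
  rwa [act_e, e_apply] at this

theorem row_mod (hg : 1 ≤ g) (s : GammaP2 g hg) (i : Idx g) :
    s.1.1 (aI hg) i ≡ (if i = aI hg then 1 else 0) [ZMOD 2] := by
  have h1 := (mem_Gamma hg s.1⁻¹).1 (inv_mem s.2)
  have h2 := form_act s.1 (e i) (act s.1⁻¹ (e (bI hg)))
  rw [act_inv_act, form_e_right, form_e_left, act_e] at h2
  have h3 : (bI hg).swap = aI hg := rfl
  have h4 : sg (bI hg) = -1 := rfl
  rw [h3, h4] at h2
  have h5 := h1 i.swap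
  rw [e_apply] at h5
  have h6 : i.swap = bI hg ↔ i = aI hg := by
    rcases i with i | i <;> simp [bI, aI]
  rw [if_congr h6 rfl rfl] at h5
  have h7 : s.1.1 (aI hg) i ≡ act s.1⁻¹ (e (bI hg)) i.swap [ZMOD 2] := by
    rcases sg_abs i with h | h <;> rw [h] at h2 <;> simp only [Int.ModEq] <;> omega
  exact h7.trans h5

theorem ent_mul (hg : 1 ≤ g) (s t : GammaP2 g hg) :
    ent hg (s * t) ≡ ent hg s + ent hg t [ZMOD 4] := by
  have hne : aI hg ≠ bI hg := by simp [aI, bI]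
  have h0 : ent hg (s * t) = ∑ k, s.1.1 (aI hg) k * t.1.1 k (bI hg) := Matrix.mul_apply
  have h1 : ent hg s + ent hg t = ∑ k, ((if k = bI hg then ent hg s else 0) +
      (if k = aI hg then ent hg t else 0)) := by
    rw [Finset.sum_add_distrib]; simp
  rw [h0, h1]
  apply Int.ModEq.sum
  intro k _
  have hr := row_mod hg s k
  have hc := col_mod hg t k
  have ev : ∀ x y : ℤ, x ≡ 1 [ZMOD 2] → y ≡ 0 [ZMOD 2] → x * y ≡ y [ZMOD 4] := by
    intro x y hx hy
    obtain ⟨a, ha⟩ := (Int.modEq_iff_dvd.1 hx)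
    obtain ⟨b, hb⟩ := (Int.modEq_iff_dvd.1 hy)
    apply Int.modEq_iff_dvd.2
    refine ⟨-(a * b), ?_⟩
    have hx' : x = 1 - 2 * a := by omega
    have hy' : y = - (2 * b) := by omega
    rw [hx', hy']; ring
  by_cases hka : k = aI hg
  · subst hka
    simp only [if_true, hne, if_false] at hr hc ⊢
    rw [zero_add]
    exact ev _ _ hr hc
  · by_cases hkb : k = bI hg
    · subst hkb
      simp only [if_true, hka, if_false] at hr hc ⊢
      rw [add_zero, mul_comm]
      exact ev _ _ hc hr
    · simp only [hka, hkb, if_false] at hr hc ⊢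
      obtain ⟨a, ha⟩ := (Int.modEq_iff_dvd.1 hr)
      obtain ⟨b, hb⟩ := (Int.modEq_iff_dvd.1 hc)
      apply Int.modEq_iff_dvd.2
      refine ⟨-(a * b), ?_⟩
      have hx' : s.1.1 (aI hg) k = - (2 * a) := by omega
      have hy' : t.1.1 k (bI hg) = - (2 * b) := by omega
      rw [hx', hy']; ring

/-- The homomorphism detecting the abelianization. -/
def phi (hg : 1 ≤ g) : GammaP2 g hg →* Multiplicative (ZMod 4) :=
  MonoidHom.mk' (fun s => Multiplicative.ofAdd ((ent hg s : ℤ) : ZMod 4)) (by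
    intro s t
    rw [← ofAdd_add]
    congr 1
    have := (ZMod.intCast_eq_intCast_iff _ _ 4).2 (ent_mul hg s t)
    rw [this]; push_cast; rfl)

theorem symT_eq (c : Vec g) : symTransvection c = (T 1 c).1 := by
  simp [symTransvection, T, Tmat]

end SpAux

theorem stmt18 (g : ℕ) (hg1 : 1 ≤ g) (hg : 4 ≤ g) (c : Fin g ⊕ Fin g → ℤ)
    (hc : Odd (c (Sum.inl (⟨g - 1, by omega⟩ : Fin g)))) :
    ∃ t : GammaP2 g hg1,
      (t.1 : Matrix (Fin g ⊕ Fin g) (Fin g ⊕ Fin g) ℤ) = symTransvection c ^ 2 ∧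
      Subgroup.zpowers (Abelianization.of t) = (⊤ : Subgroup (Abelianization ↥(GammaP2 g hg1))) ∧
      t ∉ commutator ↥(GammaP2 g hg1) := by
  have hmem : SpAux.T 2 c ∈ GammaP2 g hg1 := SpAux.T_mem hg1 2 c (by simp)
  have hnot : (⟨SpAux.T 2 c, hmem⟩ : GammaP2 g hg1) ∉ commutator ↥(GammaP2 g hg1) := by
    intro h
    have h1 := Abelianization.commutator_subset_ker (SpAux.phi hg1) h
    rw [MonoidHom.mem_ker] at h1
    have h2 : ((SpAux.ent hg1 ⟨SpAux.T 2 c, hmem⟩ : ℤ) : ZMod 4) = 0 := h1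
    rw [ZMod.intCast_zmod_eq_zero_iff_dvd] at h2
    have h3 : SpAux.ent hg1 ⟨SpAux.T 2 c, hmem⟩ =
        - (2 * (c (SpAux.aI hg1) * c (SpAux.aI hg1))) := by
      unfold SpAux.ent
      rw [← SpAux.act_e, SpAux.act_T, SpAux.form_e_left]
      have e1 : (SpAux.bI hg1).swap = SpAux.aI hg1 := rfl
      have e2 : SpAux.sg (SpAux.bI hg1) = -1 := rfl
      have e3 : SpAux.aI hg1 ≠ SpAux.bI hg1 := by simp [SpAux.aI, SpAux.bI]
      rw [e1, e2, Pi.add_apply, SpAux.e_apply, if_neg e3, Pi.smul_apply, smul_eq_mul]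
      ring
    have hc' : Odd (c (SpAux.aI hg1)) := hc
    obtain ⟨m, hm⟩ := hc'.mul hc'
    rw [h3, hm] at h2
    push_cast at h2
    omega
  refine ⟨⟨SpAux.T 2 c, hmem⟩, ?_, ?_, hnot⟩
  · rw [SpAux.symT_eq, pow_two]
    have : SpAux.T 2 c = SpAux.T 1 c * SpAux.T 1 c := by rw [SpAux.T_add]; norm_num
    exact congrArg Subtype.val this
  · have hne : Abelianization.of (⟨SpAux.T 2 c, hmem⟩ : GammaP2 g hg1) ≠ 1 := by
      intro h
      apply hnot
      rw [← Abelianization.ker_of]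
      exact h
    have ht := (SpAux.ab_cases hg1 hg (Abelianization.of ⟨SpAux.T 2 c, hmem⟩)).resolve_left hne
    rw [eq_top_iff]
    intro x _
    rcases SpAux.ab_cases hg1 hg x with rfl | rfl
    · exact one_mem _
    · rw [ht]; exact Subgroup.mem_zpowers _
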